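/- arXiv:1107.0832 — 2 statements merged into one kernel-verified Lean document; each statement's English description precedes it below -/
import Mathlib

section
/- Asymptotics of the derivatives of the Laguerre kernel at the origin: for α > −1 and every fixed k, h ∈ ℕ, lim_{n→∞} K_n^{(k,h)}(0,0)/n^{α+k+h+1} = (−1)^{k+h} Γ(α+1) / ((α+k+h+1) Γ(α+k+1) Γ(α+h+1)); in particular this limit is nonzero. -/
/-!
The proof reduces the kernel to a sum of ratios of Gamma functions and compares that sum with one
that telescopes.

Since `i! / (i - k)!` is the falling factorial of `i` (zero when `i < k`), the `i`-th term of the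
kernel equals the constant `(-1)^(k+h) Γ(α+1) / (Γ(α+k+1) Γ(α+h+1))` times
`Γ(i+α+1)/i! · i(i-1)⋯(i-k+1) · i(i-1)⋯(i-h+1)`. Euler's limit formula gives
`Γ(i+s+1)/i! ~ i^s` for `s > -1` (`isEquivalent_gammaRatio`), so the last product is equivalent to
`i^(α+k+h)`, hence also to `Γ(i+β+1)/i!` with `β = α + k + h`.
The latter sequence has the closed-form partial sums `∑_{i<n+1} Γ(i+β+1)/i! = Γ(n+β+2)/(n! (β+1))`
(`sum_gammaRatio`), which are equivalent to `n^(β+1)/(β+1)`. As these diverge and the terms are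
positive, equivalence of the terms passes to the partial sums.
-/


open Real MeasureTheory Filter Finset Topology
open scoped ENNReal NNReal

noncomputable section

/-- Generalized Laguerre polynomial `L_n^α(x) = ∑_{k=0}^n (-1)^k C(n+α, n-k) x^k / k!`,
where `C(n+α, n-k) = Γ(n+α+1)/((n-k)! Γ(α+k+1))`. -/
def lagP (α : ℝ) (n : ℕ) (x : ℝ) : ℝ :=
  ∑ k ∈ Finset.range (n + 1),
    (-1 : ℝ) ^ k *
      (Real.Gamma ((n : ℝ) + α + 1) /
        ((Nat.factorial (n - k) : ℝ) * Real.Gamma (α + (k : ℝ) + 1))) *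
      x ^ k / (Nat.factorial k : ℝ)

/-- `‖L_n^α‖² = Γ(n+α+1)/(n! Γ(α+1))`. -/
def lagNormSq (α : ℝ) (n : ℕ) : ℝ :=
  Real.Gamma ((n : ℝ) + α + 1) / ((Nat.factorial n : ℝ) * Real.Gamma (α + 1))

/-- Orthonormal Laguerre polynomial `l_n^α`. -/
def lagON (α : ℝ) (n : ℕ) (x : ℝ) : ℝ :=
  lagP α n x / Real.sqrt (lagNormSq α n)

/-- The discrete Laguerre–Sobolev inner product
`⟨f,g⟩_S = (1/Γ(α+1)) ∫_0^∞ f g x^α e^{-x} dx + ∑_{j=0}^N M_j f^{(j)}(0) g^{(j)}(0)`. -/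
def sobInner (α : ℝ) (N : ℕ) (M : ℕ → ℝ) (f g : ℝ → ℝ) : ℝ :=
  (1 / Real.Gamma (α + 1)) *
      ∫ x in Set.Ioi (0 : ℝ), f x * g x * x ^ α * Real.exp (-x)
    + ∑ j ∈ Finset.range (N + 1), M j * iteratedDeriv j f 0 * iteratedDeriv j g 0

/-- `Q n` is a polynomial of degree `n` with the same leading coefficient `(-1)^n/n!`
as `L_n^α` which is `⟨·,·⟩_S`-orthogonal to all polynomials of degree `< n`. -/
def IsSobolevOPS (α : ℝ) (N : ℕ) (M : ℕ → ℝ) (Q : ℕ → ℝ → ℝ) : Prop :=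
  ∀ n : ℕ,
    (∃ P : Polynomial ℝ, (∀ x, Q n x = P.eval x) ∧ P.degree = (n : ℕ) ∧
        P.leadingCoeff = (-1 : ℝ) ^ n / (Nat.factorial n : ℝ)) ∧
    ∀ r : Polynomial ℝ, r.degree < (n : ℕ) → sobInner α N M (Q n) (fun x => r.eval x) = 0

/-- The orthonormal discrete Laguerre–Sobolev polynomial `q_n`. -/
def sobON (α : ℝ) (N : ℕ) (M : ℕ → ℝ) (Q : ℕ → ℝ → ℝ) (n : ℕ) (x : ℝ) : ℝ :=
  Q n x / Real.sqrt (sobInner α N M (Q n) (Q n))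



/-- The derivative `K_n^{(k,h)}(0,0)` of the `n`-th Laguerre kernel at the origin. -/
def lagKernelDeriv (α : ℝ) (k h : ℕ) (n : ℕ) : ℝ :=
  ∑ i ∈ Finset.range (n + 1),
    iteratedDeriv k (lagP α i) 0 * iteratedDeriv h (lagP α i) 0 / lagNormSq α i


open Asymptotics

/-- The ratio `Γ(n+s+1)/n!`, equal to `Γ(s+1)` times the generalized binomial coefficient
`C(n+s, n)`. -/
def gammaRatio (s : ℝ) (n : ℕ) : ℝ := Real.Gamma ((n : ℝ) + s + 1) / (Nat.factorial n : ℝ)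

lemma gammaRatio_pos {s : ℝ} (hs : -1 < s) (n : ℕ) : 0 < gammaRatio s n := by
  have hn : (0 : ℝ) ≤ n := n.cast_nonneg
  have : 0 < Real.Gamma ((n : ℝ) + s + 1) := Real.Gamma_pos_of_pos (by linarith)
  unfold gammaRatio
  positivity

lemma prod_add_natCast_eq_Gamma_div {t : ℝ} (ht : 0 < t) (m : ℕ) :
    ∏ j ∈ Finset.range m, (t + j) = Real.Gamma (t + m) / Real.Gamma t := by
  have h0 : Real.Gamma t ≠ 0 := (Real.Gamma_pos_of_pos ht).ne'
  induction m with
  | zero => simp [h0]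
  | succ m ih =>
    have hm : (0 : ℝ) ≤ m := m.cast_nonneg
    rw [Finset.prod_range_succ, ih, Nat.cast_succ, ← add_assoc,
      Real.Gamma_add_one (by linarith : t + (m : ℝ) ≠ 0)]
    ring

/-- Euler's limit formula, read as the growth rate `Γ(n+s+1)/n! ~ n^s`. -/
lemma isEquivalent_gammaRatio {s : ℝ} (hs : -1 < s) :
    gammaRatio s ~[atTop] fun n : ℕ => (n : ℝ) ^ s := by
  have hG : Real.Gamma (s + 1) ≠ 0 := (Real.Gamma_pos_of_pos (by linarith)).ne'
  refine (isEquivalent_iff_tendsto_one ?_).2 ?_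
  · filter_upwards [eventually_gt_atTop 0] with n hn
    have hn : (0 : ℝ) < n := by exact_mod_cast hn
    positivity
  have h1 : Tendsto (fun n : ℕ => (n : ℝ) / ((n : ℝ) + (s + 1))) atTop (𝓝 1) :=
    tendsto_natCast_div_add_atTop (s + 1)
  have h2 := ((tendsto_const_nhds (x := Real.Gamma (s + 1))).div
    (Real.GammaSeq_tendsto_Gamma (s + 1)) hG).mul h1
  rw [div_self hG, one_mul] at h2
  refine h2.congr' ?_
  filter_upwards [eventually_gt_atTop 0] with n hn
  have hn : (0 : ℝ) < n := by exact_mod_cast hn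
  have hf : (0 : ℝ) < n.factorial := by exact_mod_cast n.factorial_pos
  have hns : (n : ℝ) + s + 1 ≠ 0 := by linarith
  have hns' : (n : ℝ) + (s + 1) ≠ 0 := by linarith
  have hp : (n : ℝ) ^ s ≠ 0 := by positivity
  have hGn : Real.Gamma ((n : ℝ) + s + 1) ≠ 0 := (Real.Gamma_pos_of_pos (by linarith)).ne'
  simp only [Pi.div_apply, gammaRatio, Real.GammaSeq]
  rw [prod_add_natCast_eq_Gamma_div (by linarith : 0 < s + 1), Real.rpow_add_one hn.ne',
    show s + 1 + ((n + 1 : ℕ) : ℝ) = ((n : ℝ) + s + 1) + 1 by push_cast; ring,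
    Real.Gamma_add_one hns]
  field_simp
  ring

/-- The hockey-stick identity for `gammaRatio`. -/
lemma sum_gammaRatio {s : ℝ} (hs : -1 < s) (n : ℕ) :
    ∑ i ∈ Finset.range (n + 1), gammaRatio s i = gammaRatio (s + 1) n / (s + 1) := by
  have hs1 : s + 1 ≠ 0 := by linarith
  induction n with
  | zero =>
    simp only [gammaRatio, zero_add, Finset.sum_range_one, Nat.cast_zero, Nat.factorial_zero]
    rw [Real.Gamma_add_one hs1]
    field_simp
  | succ n ih =>
    have hn : (0 : ℝ) ≤ n := n.cast_nonneg
    have hf : (n.factorial : ℝ) ≠ 0 := by exact_mod_cast n.factorial_ne_zero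
    rw [Finset.sum_range_succ, ih]
    simp only [gammaRatio, Nat.factorial_succ]
    push_cast
    rw [show (n : ℝ) + 1 + (s + 1) + 1 = ((n : ℝ) + s + 1 + 1) + 1 by ring,
      Real.Gamma_add_one (by linarith : (n : ℝ) + s + 1 + 1 ≠ 0),
      show (n : ℝ) + 1 + s + 1 = (n : ℝ) + s + 1 + 1 by ring,
      show (n : ℝ) + (s + 1) + 1 = (n : ℝ) + s + 1 + 1 by ring]
    field_simp
    ring

lemma tendsto_sum_gammaRatio_atTop {s : ℝ} (hs : -1 < s) :
    Tendsto (fun n => ∑ i ∈ Finset.range n, gammaRatio s i) atTop atTop := by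
  refine (tendsto_add_atTop_iff_nat 1).1 ?_
  simp only [sum_gammaRatio hs]
  refine Tendsto.atTop_div_const (by linarith) ?_
  exact (isEquivalent_gammaRatio (by linarith : -1 < s + 1)).symm.tendsto_atTop
    ((tendsto_rpow_atTop (by linarith)).comp tendsto_natCast_atTop_atTop)

/-- Equivalence to a sequence `Γ(n+s+1)/n!` passes to partial sums, as the latter diverge. -/
lemma isEquivalent_sum_of_isEquivalent_gammaRatio {s : ℝ} (hs : -1 < s) {a : ℕ → ℝ}
    (ha : a ~[atTop] gammaRatio s) :
    (fun n => ∑ i ∈ Finset.range (n + 1), a i) ~[atTop]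
      fun n : ℕ => (n : ℝ) ^ (s + 1) / (s + 1) := by
  have h1 : (fun n => ∑ i ∈ Finset.range n, a i) ~[atTop]
      fun n => ∑ i ∈ Finset.range n, gammaRatio s i := by
    have h := IsLittleO.sum_range ha.isLittleO (fun n => (gammaRatio_pos hs n).le)
      (tendsto_sum_gammaRatio_atTop hs)
    simpa only [IsEquivalent, Pi.sub_def, Finset.sum_sub_distrib] using h
  have h2 := h1.comp_tendsto (tendsto_add_atTop_nat 1)
  have h3 : (fun n => ∑ i ∈ Finset.range (n + 1), gammaRatio s i) ~[atTop]
      fun n : ℕ => (n : ℝ) ^ (s + 1) / (s + 1) := by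
    simp only [sum_gammaRatio hs]
    exact (isEquivalent_gammaRatio (by linarith : -1 < s + 1)).div IsEquivalent.refl
  exact h2.trans h3

/-- The falling factorial encodes the vanishing of the derivative when `n < k`. -/
lemma iteratedDeriv_lagP_zero (α : ℝ) (k n : ℕ) :
    iteratedDeriv k (lagP α n) 0 =
      (-1) ^ k * gammaRatio α n * (n.descFactorial k : ℝ) / Real.Gamma (α + k + 1) := by
  have hk : (k.factorial : ℝ) ≠ 0 := by exact_mod_cast k.factorial_ne_zero
  have key : lagP α n = fun x => ∑ j ∈ Finset.range (n + 1),
      ((-1 : ℝ) ^ j * (Real.Gamma ((n : ℝ) + α + 1) /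
        ((Nat.factorial (n - j) : ℝ) * Real.Gamma (α + (j : ℝ) + 1))) /
          (Nat.factorial j : ℝ)) * x ^ j := by
    funext x
    exact Finset.sum_congr rfl fun j _ => by ring
  rw [key, iteratedDeriv_fun_sum (fun j _ => by fun_prop)]
  simp only [iteratedDeriv_const_mul_field, iteratedDeriv_fun_pow_zero]
  rcases Nat.lt_or_ge n k with hnk | hnk
  · rw [Nat.descFactorial_of_lt hnk, Finset.sum_eq_zero]
    · simp
    · intro j hj
      have : j ≠ k := by have := Finset.mem_range.1 hj; omega
      simp [this.symm]
  · rw [Finset.sum_eq_single_of_mem k (Finset.mem_range.2 (by omega))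
      (fun j _ hj => by simp [hj.symm])]
    have h1 : ((n - k).factorial : ℝ) ≠ 0 := by exact_mod_cast (n - k).factorial_ne_zero
    have h2 : (n.descFactorial k : ℝ) ≠ 0 := by
      rw [Nat.cast_ne_zero, Ne, Nat.descFactorial_eq_zero_iff_lt]
      omega
    have h3 : (n.factorial : ℝ) = (n - k).factorial * n.descFactorial k := by
      exact_mod_cast (Nat.factorial_mul_descFactorial hnk).symm
    simp only [gammaRatio, h3, if_true]
    field_simp

lemma lagKernelDeriv_eq {α : ℝ} (hα : -1 < α) (k h n : ℕ) :
    lagKernelDeriv α k h n =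
      ((-1) ^ (k + h) * Real.Gamma (α + 1) /
        (Real.Gamma (α + k + 1) * Real.Gamma (α + h + 1))) *
      ∑ i ∈ Finset.range (n + 1),
        gammaRatio α i * (i.descFactorial k : ℝ) * (i.descFactorial h : ℝ) := by
  rw [lagKernelDeriv, Finset.mul_sum]
  refine Finset.sum_congr rfl fun i _ => ?_
  have hr : gammaRatio α i ≠ 0 := (gammaRatio_pos hα i).ne'
  have hN : lagNormSq α i = gammaRatio α i / Real.Gamma (α + 1) := by
    rw [lagNormSq, gammaRatio, div_div]
  have hG : Real.Gamma (α + 1) ≠ 0 := (Real.Gamma_pos_of_pos (by linarith)).ne'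
  rw [iteratedDeriv_lagP_zero, iteratedDeriv_lagP_zero, hN, pow_add]
  field_simp

lemma isEquivalent_term {α : ℝ} (hα : -1 < α) (k h : ℕ) :
    (fun i : ℕ => gammaRatio α i * (i.descFactorial k : ℝ) * (i.descFactorial h : ℝ))
      ~[atTop] gammaRatio (α + k + h) := by
  have hk : (0 : ℝ) ≤ k := k.cast_nonneg
  have hh : (0 : ℝ) ≤ h := h.cast_nonneg
  have h1 := ((isEquivalent_gammaRatio hα).mul (isEquivalent_descFactorial k)).mul
    (isEquivalent_descFactorial h)
  refine (h1.congr_right ?_).trans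
    (isEquivalent_gammaRatio (by linarith : -1 < α + k + h)).symm
  filter_upwards [eventually_gt_atTop 0] with n hn
  have hn : (0 : ℝ) < n := by exact_mod_cast hn
  simp only [Pi.mul_apply]
  rw [Real.rpow_add hn, Real.rpow_add hn, Real.rpow_natCast, Real.rpow_natCast]

/-- asymptotics of the derivatives of the Laguerre kernel at the origin. -/
theorem statement13 (α : ℝ) (hα : -1 < α) (k h : ℕ) :
    Tendsto (fun n : ℕ =>
        lagKernelDeriv α k h n / (n : ℝ) ^ (α + (k : ℝ) + (h : ℝ) + 1))
      atTop
      (𝓝 ((-1 : ℝ) ^ (k + h) * Real.Gamma (α + 1) /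
        ((α + (k : ℝ) + (h : ℝ) + 1) * Real.Gamma (α + (k : ℝ) + 1) *
          Real.Gamma (α + (h : ℝ) + 1)))) ∧
    (-1 : ℝ) ^ (k + h) * Real.Gamma (α + 1) /
        ((α + (k : ℝ) + (h : ℝ) + 1) * Real.Gamma (α + (k : ℝ) + 1) *
          Real.Gamma (α + (h : ℝ) + 1)) ≠ 0 := by
  have hk : (0 : ℝ) ≤ k := k.cast_nonneg
  have hh : (0 : ℝ) ≤ h := h.cast_nonneg
  have hG : Real.Gamma (α + 1) ≠ 0 := (Real.Gamma_pos_of_pos (by linarith)).ne'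
  have hGk : Real.Gamma (α + k + 1) ≠ 0 := (Real.Gamma_pos_of_pos (by linarith)).ne'
  have hGh : Real.Gamma (α + h + 1) ≠ 0 := (Real.Gamma_pos_of_pos (by linarith)).ne'
  have hβ : α + k + h + 1 ≠ 0 := by linarith
  constructor
  · have hsum := isEquivalent_sum_of_isEquivalent_gammaRatio
      (by linarith : -1 < α + k + h) (isEquivalent_term hα k h)
    have hne : ∀ᶠ n : ℕ in atTop, (n : ℝ) ^ (α + k + h + 1) / (α + k + h + 1) ≠ 0 := by
      filter_upwards [eventually_gt_atTop 0] with n hn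
      have hn : (0 : ℝ) < n := by exact_mod_cast hn
      exact div_ne_zero (by positivity) hβ
    have hlim := ((isEquivalent_iff_tendsto_one hne).1 hsum).const_mul
      ((-1) ^ (k + h) * Real.Gamma (α + 1) /
        ((α + k + h + 1) * Real.Gamma (α + k + 1) * Real.Gamma (α + h + 1)))
    rw [mul_one] at hlim
    refine hlim.congr fun n => ?_
    rw [lagKernelDeriv_eq hα]
    simp only [Pi.div_apply]
    field_simp
  · have : (-1 : ℝ) ^ (k + h) ≠ 0 := pow_ne_zero _ (by norm_num)
    positivity

end
end

section
/- Let α > −1, 1 ≤ p < ∞, and let b_0, …, b_{N+1} be real numbers such that the function F(u) = Σ_{j=0}^{N+1} b_j J_{α+2j}(u) is not identically zero, where J_ν is the Bessel function of the first kind. Let λ be a real number with λ > −1 − αp. (i) If λ < p/2 − 1, then there exist constants 0 < c_1 ≤ c_2 with c_1 ≤ ∫_0^{2n^{1/4}} u^λ |F(u)|^p du ≤ c_2 for all large n. (ii) If λ = p/2 − 1 and additionally Σ_{j=0}^{N+1} (−1)^j b_j ≠ 0, then there exist constants 0 < c_1 ≤ c_2 with c_1 log(n+1) ≤ ∫_0^{2n^{1/4}}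 u^λ |F(u)|^p du ≤ c_2 log(n+1) for all large n. -/
/-!
Write `F` for the Bessel sum. Near `0` it is `u^α` times a continuous function, so the integrand is
`O(u^(λ + α p))`, which is integrable since `λ + α p > -1`. At infinity everything is governed by
`√u F(u)`, because `u^λ |F|^p = u^(λ - p/2) |√u F|^p`.

The function `w = √u J_ν(u)` solves `w'' = ((ν² - 1/4)/u² - 1) w`. Its energy `w² + w'²` changes
by a factor bounded above and below on `[1, ∞)` (`OscSol.energy_anti`, `OscSol.energy_mono`).
Hence `w` is bounded, and the three-term recurrence gives
`√u J_{α+2j} = (-1)^j √u J_α + O(1/u)` (`besselW_shift`). Summing,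
`√u F = s √u J_α + O(1/u)` with `s = ∑ (-1)^j b_j`; in particular `√u F` is bounded. This yields
convergence of the integral when `λ < p/2 - 1`, and the logarithmic upper bound when
`λ = p/2 - 1`.

For the logarithmic lower bound no asymptotic phase is needed. The identity
`(w w')' = w'² - w² + c w²/u²`, with `c = ν² - 1/4`, shows that `2 w²/u` equals `(w² + w'²)/u` up
to the derivative of a bounded function and an `O(u⁻²)` term, so `∫_1^T w²/u` grows at least like
`log T` (`OscSol.logDominant`). The energy is bounded below by a positive constant since
`J_α` does not vanish identically near `0`. The elementary inequalities `|W| ≥ W²/M` for `|W| ≤ M`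
and `x^p ≥ δ^(p-1) (x - δ)` carry the bound from `w²` to `|√u F|^p` (`logDominant_rpow`).
-/

open Real MeasureTheory Filter Finset Topology
open scoped ENNReal NNReal

noncomputable section

/-- Bessel function of the first kind,
`J_ν(u) = ∑_{m=0}^∞ (-1)^m (u/2)^{ν+2m} / (m! Γ(m+ν+1))`. -/
def besselJ (ν : ℝ) (u : ℝ) : ℝ :=
  ∑' m : ℕ, (-1 : ℝ) ^ m * (u / 2) ^ (ν + 2 * (m : ℝ)) /
    ((Nat.factorial m : ℝ) * Real.Gamma ((m : ℝ) + ν + 1))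

/-! ### The power series and the three-term recurrence -/

/-- The positive coefficients `1 / (m! Γ(m + ν + 1))` of the Bessel series. -/
def besselCoeff (ν : ℝ) (m : ℕ) : ℝ :=
  ((Nat.factorial m : ℝ) * Real.Gamma ((m : ℝ) + ν + 1))⁻¹

/-- The entire function `g_ν(x) = ∑ (-x)^m / (m! Γ(m + ν + 1))`, so that
`J_ν(u) = (u/2)^ν g_ν(u²/4)` for `u > 0`. -/
def besselG (ν x : ℝ) : ℝ := ∑' m : ℕ, besselCoeff ν m * (-x) ^ m

lemma besselCoeff_pos {ν : ℝ} (hν : -1 < ν) (m : ℕ) : 0 < besselCoeff ν m := by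
  unfold besselCoeff
  have h1 : 0 < Real.Gamma ((m : ℝ) + ν + 1) :=
    Real.Gamma_pos_of_pos (by have := (Nat.cast_nonneg m : (0 : ℝ) ≤ m); linarith)
  positivity

lemma besselCoeff_succ {ν : ℝ} (hν : -1 < ν) (m : ℕ) :
    besselCoeff ν (m + 1) * (((m : ℝ) + 1) * ((m : ℝ) + ν + 1)) = besselCoeff ν m := by
  unfold besselCoeff
  have h0 : (0 : ℝ) < (m : ℝ) + ν + 1 := by
    have := (Nat.cast_nonneg m : (0 : ℝ) ≤ m); linarith
  have h1 : 0 < Real.Gamma ((m : ℝ) + ν + 1) := Real.Gamma_pos_of_pos h0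
  have h2 : Real.Gamma (((m + 1 : ℕ) : ℝ) + ν + 1)
      = ((m : ℝ) + ν + 1) * Real.Gamma ((m : ℝ) + ν + 1) := by
    rw [← Real.Gamma_add_one h0.ne']; congr 1; push_cast; ring
  rw [h2, Nat.factorial_succ]
  push_cast
  have h3 : (Nat.factorial m : ℝ) ≠ 0 := by positivity
  field_simp

lemma besselCoeff_succ_mul (ν : ℝ) (m : ℕ) :
    besselCoeff ν (m + 1) * ((m : ℝ) + 1) = besselCoeff (ν + 1) m := by
  unfold besselCoeff
  have h2 : ((m + 1 : ℕ) : ℝ) + ν + 1 = (m : ℝ) + (ν + 1) + 1 := by push_cast; ring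
  rw [h2, Nat.factorial_succ]
  push_cast
  have h3 : (m : ℝ) + 1 ≠ 0 := by positivity
  rw [mul_inv, mul_inv, mul_inv]
  field_simp

lemma besselCoeff_recurrence {ν : ℝ} (hν : -1 < ν) (m : ℕ) :
    besselCoeff ν m = ((m : ℝ) + ν + 1) * besselCoeff (ν + 1) m := by
  rw [← besselCoeff_succ hν, ← besselCoeff_succ_mul]; ring

lemma summable_besselCoeff {ν : ℝ} (hν : -1 < ν) (x : ℝ) :
    Summable fun m : ℕ => besselCoeff ν m * x ^ m := by
  rcases eq_or_ne x 0 with rfl | hx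
  · apply summable_of_ne_finset_zero (s := {0})
    intro m hm
    have : m ≠ 0 := by simpa using hm
    simp [this]
  have hpos : ∀ m : ℕ, (0 : ℝ) < (m : ℝ) + ν + 1 := fun m => by
    have := (Nat.cast_nonneg m : (0 : ℝ) ≤ m); linarith
  refine summable_of_ratio_test_tendsto_lt_one (l := 0) one_pos
    (Eventually.of_forall fun m => mul_ne_zero (besselCoeff_pos hν m).ne' (pow_ne_zero _ hx)) ?_
  have hlim : Tendsto (fun m : ℕ => |x| * (((m : ℝ) + 1)⁻¹ * ((m : ℝ) + ν + 1)⁻¹)) atTop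
      (𝓝 (|x| * (0 * 0))) := by
    refine Tendsto.const_mul _ (Tendsto.mul ?_ ?_)
    · exact tendsto_inv_atTop_zero.comp (tendsto_atTop_add_const_right _ _ tendsto_natCast_atTop_atTop)
    · refine tendsto_inv_atTop_zero.comp ?_
      simp_rw [add_assoc]
      exact tendsto_atTop_add_const_right _ _ tendsto_natCast_atTop_atTop
  simp only [mul_zero] at hlim
  refine hlim.congr fun m => ?_
  have h1 := besselCoeff_pos hν (m + 1)
  have h2 := hpos m
  rw [← besselCoeff_succ hν m, norm_mul, norm_mul, norm_mul, norm_mul, norm_pow, norm_pow,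
    Real.norm_of_nonneg h1.le, Real.norm_of_nonneg (by positivity : (0 : ℝ) ≤ (m : ℝ) + 1),
    Real.norm_of_nonneg h2.le, Real.norm_eq_abs, pow_succ]
  have : |x| ≠ 0 := by simpa using hx
  field_simp

/-- The three-term recurrence of the Bessel functions at the level of `g_ν`, by comparing
coefficients. -/
lemma besselG_recurrence {ν : ℝ} (hν : -1 < ν) (x : ℝ) :
    besselG ν x = (ν + 1) * besselG (ν + 1) x - x * besselG (ν + 2) x := by
  have s0 := summable_besselCoeff hν (-x)
  have s1 := summable_besselCoeff (by linarith : -1 < ν + 1) (-x)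
  have s2 := summable_besselCoeff (by linarith : -1 < ν + 2) (-x)
  unfold besselG
  rw [s0.tsum_eq_zero_add, s1.tsum_eq_zero_add, ← tsum_mul_left, mul_add, ← tsum_mul_left,
    add_sub_assoc, ← Summable.tsum_sub (((summable_nat_add_iff 1).2 s1).mul_left _) (s2.mul_left _)]
  congr 1
  · rw [besselCoeff_recurrence hν 0]; simp
  · refine tsum_congr fun m => ?_
    rw [besselCoeff_recurrence hν (m + 1)]
    have := besselCoeff_succ_mul (ν + 1) m
    rw [show ν + 1 + 1 = ν + 2 by ring] at this
    rw [← this]; push_cast; ring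

lemma hasDerivAt_besselG {ν : ℝ} (hν : -1 < ν) (x : ℝ) :
    HasDerivAt (besselG ν) (-besselG (ν + 1) x) x := by
  have hν1 : -1 < ν + 1 := by linarith
  set R := |x| + 1 with hR
  have hRpos : 0 < R := by positivity
  have hmem : x ∈ Metric.ball (0 : ℝ) R := by simp [hR]
  have hsum : Summable fun m : ℕ => besselCoeff ν m * ((m : ℝ) * R ^ (m - 1)) := by
    rw [← summable_nat_add_iff 1]
    refine (summable_besselCoeff hν1 R).congr fun m => ?_
    rw [← besselCoeff_succ_mul, Nat.add_sub_cancel]; push_cast; ring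
  have key := hasDerivAt_tsum_of_isPreconnected (𝕜 := ℝ) (t := Metric.ball (0 : ℝ) R)
    (g := fun m y => besselCoeff ν m * (-y) ^ m)
    (g' := fun m y => besselCoeff ν m * ((m : ℝ) * (-y) ^ (m - 1) * -1)) (y := x) (y₀ := x)
    hsum Metric.isOpen_ball (convex_ball (0 : ℝ) R).isPreconnected
    (fun m y _ => ((hasDerivAt_neg y).fun_pow m).const_mul _) ?_ hmem
    (summable_besselCoeff hν (-x)) hmem
  · refine key.congr_deriv ?_
    have hs : Summable fun m : ℕ => besselCoeff ν m * ((m : ℝ) * (-x) ^ (m - 1) * -1) := by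
      rw [← summable_nat_add_iff 1]
      refine (summable_besselCoeff hν1 (-x)).neg.congr fun m => ?_
      rw [← besselCoeff_succ_mul]; push_cast; simp; ring
    rw [hs.tsum_eq_zero_add, besselG, ← tsum_neg]
    simp only [Nat.cast_zero, zero_mul, mul_zero, zero_add]
    refine tsum_congr fun m => ?_
    rw [← besselCoeff_succ_mul]; push_cast; simp; ring
  · intro m y hy
    have hy' : |y| ≤ R := by simpa using (Metric.mem_ball.1 hy).le
    rw [norm_mul, norm_mul, norm_mul, Real.norm_of_nonneg (besselCoeff_pos hν m).le, norm_pow,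
      norm_neg, norm_neg, norm_one, mul_one, Real.norm_of_nonneg (Nat.cast_nonneg m),
      Real.norm_eq_abs]
    have := (besselCoeff_pos hν m).le
    gcongr

lemma besselG_zero_pos {ν : ℝ} (hν : -1 < ν) : 0 < besselG ν 0 := by
  have : besselG ν 0 = besselCoeff ν 0 := by
    unfold besselG
    rw [tsum_eq_single 0 (fun m hm => by simp [hm])]; simp
  rw [this]; exact besselCoeff_pos hν 0

lemma continuous_besselG {ν : ℝ} (hν : -1 < ν) : Continuous (besselG ν) :=
  continuous_iff_continuousAt.2 fun x => (hasDerivAt_besselG hν x).continuousAt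

lemma besselJ_eq (ν : ℝ) {u : ℝ} (hu : 0 < u) :
    besselJ ν u = (u / 2) ^ ν * besselG ν (u ^ 2 / 4) := by
  unfold besselJ besselG besselCoeff
  rw [← tsum_mul_left]
  refine tsum_congr fun m => ?_
  have h2 : (0 : ℝ) < u / 2 := by positivity
  rw [Real.rpow_add h2, Real.rpow_mul h2.le, Real.rpow_natCast, Real.rpow_two,
    show -(u ^ 2 / 4) = -1 * (u / 2) ^ 2 by ring, mul_pow, div_eq_mul_inv]
  ring

lemma besselJ_recurrence {ν : ℝ} (hν : -1 < ν) {u : ℝ} (hu : 0 < u) :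
    besselJ (ν + 2) u = 2 * (ν + 1) / u * besselJ (ν + 1) u - besselJ ν u := by
  have h2 : (0 : ℝ) < u / 2 := by positivity
  rw [besselJ_eq _ hu, besselJ_eq _ hu, besselJ_eq _ hu, besselG_recurrence hν,
    Real.rpow_add h2, Real.rpow_add h2, Real.rpow_one, Real.rpow_two]
  field_simp
  ring

/-! ### Bessel's equation in Liouville normal form -/

/-- The Liouville normal form `w(u) = √u J_ν(u)` of the Bessel function. -/
def besselW (ν u : ℝ) : ℝ := u ^ (1 / 2 : ℝ) * besselJ ν u

/-- The derivative of `besselW ν` on `(0, ∞)`. -/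
def besselW' (ν u : ℝ) : ℝ :=
  (1 / 2) ^ ν * ((ν + 1 / 2) * u ^ (ν - 1 / 2) * besselG ν (u ^ 2 / 4)
    - u ^ (ν + 3 / 2) / 2 * besselG (ν + 1) (u ^ 2 / 4))

lemma besselW_eq (ν : ℝ) {u : ℝ} (hu : 0 < u) :
    besselW ν u = (1 / 2) ^ ν * (u ^ (ν + 1 / 2) * besselG ν (u ^ 2 / 4)) := by
  rw [besselW, besselJ_eq ν hu, Real.rpow_add hu,
    show u / 2 = u * (1 / 2) by ring, Real.mul_rpow hu.le (by norm_num)]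
  ring

lemma hasDerivAt_besselG_sq {ν : ℝ} (hν : -1 < ν) (u : ℝ) :
    HasDerivAt (fun u => besselG ν (u ^ 2 / 4)) (-besselG (ν + 1) (u ^ 2 / 4) * (u / 2)) u := by
  have h1 : HasDerivAt (fun u : ℝ => u ^ 2 / 4) (u / 2) u :=
    ((hasDerivAt_pow 2 u).div_const 4).congr_deriv (by norm_num; ring)
  exact (hasDerivAt_besselG hν (u ^ 2 / 4)).comp u h1

lemma hasDerivAt_besselW {ν : ℝ} (hν : -1 < ν) {u : ℝ} (hu : 0 < u) :
    HasDerivAt (besselW ν) (besselW' ν u) u := by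
  have h1 := ((Real.hasDerivAt_rpow_const (p := ν + 1 / 2) (Or.inl hu.ne')).mul
    (hasDerivAt_besselG_sq hν u)).const_mul ((1 / 2 : ℝ) ^ ν)
  refine (h1.congr_of_eventuallyEq ?_).congr_deriv ?_
  · filter_upwards [lt_mem_nhds hu] with v hv using besselW_eq ν hv
  · rw [besselW', show ν + 3 / 2 = (ν + 1 / 2) + 1 by ring, Real.rpow_add hu (ν + 1 / 2) 1,
      Real.rpow_one, show ν + 1 / 2 - 1 = ν - 1 / 2 by ring]
    ring

/-- Bessel's equation in Liouville normal form: `w'' = ((ν² - 1/4)/u² - 1) w`. -/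
lemma hasDerivAt_besselW' {ν : ℝ} (hν : -1 < ν) {u : ℝ} (hu : 0 < u) :
    HasDerivAt (besselW' ν) (((ν ^ 2 - 1 / 4) / u ^ 2 - 1) * besselW ν u) u := by
  have h1 := ((((Real.hasDerivAt_rpow_const (p := ν - 1 / 2) (Or.inl hu.ne')).const_mul
    (ν + 1 / 2)).mul (hasDerivAt_besselG_sq hν u)).sub
    (((Real.hasDerivAt_rpow_const (p := ν + 3 / 2) (Or.inl hu.ne')).div_const 2).mul
    (hasDerivAt_besselG_sq (by linarith : -1 < ν + 1) u))).const_mul ((1 / 2 : ℝ) ^ ν)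
  refine h1.congr_deriv ?_
  rw [besselW_eq ν hu, besselG_recurrence hν (u ^ 2 / 4)]
  rw [show ν - 1 / 2 - 1 = ν + 1 / 2 - (2 : ℕ) by push_cast; ring,
    show ν - 1 / 2 = ν + 1 / 2 - (1 : ℕ) by push_cast; ring,
    show ν + 3 / 2 - 1 = ν + 1 / 2 by ring,
    show ν + 3 / 2 = ν + 1 / 2 + (1 : ℕ) by push_cast; ring,
    Real.rpow_sub_natCast hu.ne', Real.rpow_sub_natCast hu.ne', Real.rpow_add_natCast hu.ne',
    show ν + 1 + 1 = ν + 2 by ring]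
  field_simp
  ring

/-! ### Energy estimates for `w'' = (c/u² - 1) w` -/

/-- The data of a solution `w` of `w'' = (c/u² - 1) w` on `(0, ∞)` with derivative `w'`. -/
structure OscSol (c : ℝ) (w w' : ℝ → ℝ) : Prop where
  h1 : ∀ u, 0 < u → HasDerivAt w (w' u) u
  h2 : ∀ u, 0 < u → HasDerivAt w' ((c / u ^ 2 - 1) * w u) u

namespace OscSol
variable {c : ℝ} {w w' : ℝ → ℝ}

/-- Derivative of the energy with the weight `exp(s/u)`; the choices `s = ±|c|` make it monotone. -/
lemma energy_deriv (h : OscSol c w w') (s : ℝ) {u : ℝ} (hu : 0 < u) :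
    HasDerivAt (fun u => (w u ^ 2 + w' u ^ 2) * Real.exp (s * u⁻¹))
      ((2 * c * (w u * w' u) - s * (w u ^ 2 + w' u ^ 2)) / u ^ 2 * Real.exp (s * u⁻¹)) u := by
  have := ((((h.h1 u hu).fun_pow 2).fun_add ((h.h2 u hu).fun_pow 2)).fun_mul
    (((hasDerivAt_inv hu.ne').const_mul s).exp))
  refine this.congr_deriv ?_
  push_cast
  field_simp
  ring

lemma cross_le (c a b : ℝ) : |2 * c * (a * b)| ≤ |c| * (a ^ 2 + b ^ 2) := by
  rw [show 2 * c * (a * b) = c * (2 * (a * b)) by ring, abs_mul]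
  refine mul_le_mul_of_nonneg_left ?_ (abs_nonneg c)
  rw [abs_le]; constructor <;> nlinarith [sq_nonneg (a - b), sq_nonneg (a + b)]

/-- Since `|E'| ≤ |c| E / u²` for the energy `E = w² + w'²`, the function `E exp(|c|/u)`
decreases. -/
lemma energy_anti (h : OscSol c w w') :
    AntitoneOn (fun u => (w u ^ 2 + w' u ^ 2) * Real.exp (|c| * u⁻¹)) (Set.Ioi 0) := by
  refine antitoneOn_of_deriv_nonpos (convex_Ioi 0)
    (fun u hu => (h.energy_deriv _ hu).continuousAt.continuousWithinAt)
    (fun u hu => ?_) (fun u hu => ?_)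
  · rw [interior_Ioi] at hu
    exact (h.energy_deriv _ hu).differentiableAt.differentiableWithinAt
  · rw [interior_Ioi] at hu
    rw [(h.energy_deriv _ hu).deriv]
    have := (abs_le.1 (cross_le c (w u) (w' u))).2
    refine mul_nonpos_of_nonpos_of_nonneg (div_nonpos_of_nonpos_of_nonneg ?_ (sq_nonneg u))
      (Real.exp_pos _).le
    linarith

lemma energy_mono (h : OscSol c w w') :
    MonotoneOn (fun u => (w u ^ 2 + w' u ^ 2) * Real.exp (-|c| * u⁻¹)) (Set.Ioi 0) := by
  refine monotoneOn_of_deriv_nonneg (convex_Ioi 0)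
    (fun u hu => (h.energy_deriv _ hu).continuousAt.continuousWithinAt)
    (fun u hu => ?_) (fun u hu => ?_)
  · rw [interior_Ioi] at hu
    exact (h.energy_deriv _ hu).differentiableAt.differentiableWithinAt
  · rw [interior_Ioi] at hu
    rw [(h.energy_deriv _ hu).deriv]
    have := (abs_le.1 (cross_le c (w u) (w' u))).1
    refine mul_nonneg (div_nonneg ?_ (sq_nonneg u)) (Real.exp_pos _).le
    linarith

lemma energy_le (h : OscSol c w w') {u : ℝ} (hu : 1 ≤ u) :
    w u ^ 2 + w' u ^ 2 ≤ (w 1 ^ 2 + w' 1 ^ 2) * Real.exp |c| := by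
  have h1 := h.energy_anti (Set.mem_Ioi.2 one_pos) (Set.mem_Ioi.2 (one_pos.trans_le hu)) hu
  simp only [inv_one, mul_one] at h1
  refine le_trans (le_mul_of_one_le_right (by positivity) (Real.one_le_exp ?_)) h1
  have : 0 < u := by linarith
  positivity

lemma le_energy (h : OscSol c w w') {u : ℝ} (hu : 1 ≤ u) :
    (w 1 ^ 2 + w' 1 ^ 2) * Real.exp (-|c|) ≤ w u ^ 2 + w' u ^ 2 := by
  have h1 := h.energy_mono (Set.mem_Ioi.2 one_pos) (Set.mem_Ioi.2 (one_pos.trans_le hu)) hu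
  simp only [inv_one, mul_one] at h1
  refine h1.trans (mul_le_of_le_one_right (by positivity) (Real.exp_le_one_iff.2 ?_))
  have : 0 < u := by linarith
  have : 0 ≤ |c| * u⁻¹ := by positivity
  linarith

/-- Backward uniqueness: zero Cauchy data at `1` force `w = 0` on `(0, 1]`. -/
lemma eq_zero_of_energy (h : OscSol c w w') (h0 : w 1 ^ 2 + w' 1 ^ 2 = 0) {u : ℝ} (hu : 0 < u)
    (hu1 : u ≤ 1) : w u = 0 := by
  have h1 := h.energy_mono (Set.mem_Ioi.2 hu) (Set.mem_Ioi.2 one_pos) hu1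
  simp only [h0, zero_mul] at h1
  have h2 : w u ^ 2 + w' u ^ 2 ≤ 0 := nonpos_of_mul_nonpos_left h1 (Real.exp_pos _)
  nlinarith [sq_nonneg (w u), sq_nonneg (w' u)]

lemma bounded (h : OscSol c w w') : ∃ M, 0 < M ∧ ∀ u, 1 ≤ u → |w u| ≤ M := by
  refine ⟨(w 1 ^ 2 + w' 1 ^ 2) * Real.exp |c| + 1, by positivity, fun u hu => ?_⟩
  have := h.energy_le hu
  have h2 : |w u| ≤ w u ^ 2 + 1 := by
    rw [← sq_abs]; nlinarith [sq_nonneg (|w u| - 1), abs_nonneg (w u)]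
  nlinarith [sq_nonneg (w' u)]

end OscSol

/-! ### Logarithmic lower bounds -/

/-- `f` dominates on `[1, ∞)` the derivative of a function that grows at least like a positive
multiple of `log`; this certifies that `∫_1^T f` grows at least like `log T`. -/
def LogDominant (f : ℝ → ℝ) : Prop :=
  ∃ (G : ℝ → ℝ) (κ C : ℝ), 0 < κ ∧ (∀ u, 1 ≤ u → ∃ d, d ≤ f u ∧ HasDerivAt G d u) ∧
    ∀ u, 1 ≤ u → κ * Real.log u - C ≤ G u

/-- The mean of `w²` against `du/u` is controlled by the energy: the identity
`(w w')' = w'² - w² + c w²/u²` shows that `2 w²/u` differs from `(w² + w'²)/u` by the derivative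
of `-w w'/u` up to `O(u⁻²)`. -/
lemma OscSol.logDominant {c : ℝ} {w w' : ℝ → ℝ} (h : OscSol c w w')
    (h0 : w 1 ^ 2 + w' 1 ^ 2 ≠ 0) : LogDominant (fun u => w u ^ 2 / u) := by
  set e := (w 1 ^ 2 + w' 1 ^ 2) * Real.exp (-|c|) with he
  set E := (w 1 ^ 2 + w' 1 ^ 2) * Real.exp |c| with hE
  have hpos : 0 < w 1 ^ 2 + w' 1 ^ 2 := lt_of_le_of_ne (by positivity) h0.symm
  have hepos : 0 < e := by positivity
  have hEpos : 0 < E := by positivity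
  set K := (|c| + 1) * E with hK
  have hKpos : 0 < K := by positivity
  -- The term `K/u` absorbs the `O(u⁻²)` errors: its derivative is `-K/u²`.
  refine ⟨fun u => (1 / 2) * (e * Real.log u - w u * w' u * u⁻¹ + K * u⁻¹), e / 2, E / 2,
    by positivity, fun u hu => ?_, fun u hu => ?_⟩
  · have hu0 : 0 < u := by linarith
    have hd := (((((Real.hasDerivAt_log hu0.ne').const_mul e).fun_sub
      (((h.h1 u hu0).fun_mul (h.h2 u hu0)).fun_mul (hasDerivAt_inv hu0.ne'))).fun_add
      ((hasDerivAt_inv hu0.ne').const_mul K)).const_mul (1 / 2 : ℝ))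
    refine ⟨_, ?_, hd⟩
    have h1 := h.energy_le hu
    have h2 := h.le_energy hu
    rw [← hE] at h1
    rw [← he] at h2
    have h3 := (abs_le.1 (OscSol.cross_le 1 (w u) (w' u)))
    rw [abs_one] at h3
    have h4 : -(|c| * E) ≤ c * w u ^ 2 := by
      have : |c| * w u ^ 2 ≤ |c| * E :=
        mul_le_mul_of_nonneg_left (by nlinarith [sq_nonneg (w' u)]) (abs_nonneg c)
      nlinarith [neg_abs_le c, sq_nonneg (w u)]
    have h5 : -(|c| * E) ≤ c * w u ^ 2 / u := by
      rw [le_div_iff₀ hu0]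
      nlinarith [mul_nonneg (mul_nonneg (abs_nonneg c) hEpos.le) (by linarith : 0 ≤ u - 1)]
    have key : w u ^ 2 / u - (1 / 2 * (e * u⁻¹ - ((w' u * w' u + w u * ((c / u ^ 2 - 1) * w u)) * u⁻¹
        + w u * w' u * -(u ^ 2)⁻¹) + K * -(u ^ 2)⁻¹))
        = 1 / 2 * (((w u ^ 2 + w' u ^ 2 - e) * u + (K + c * w u ^ 2 / u - w u * w' u)) / u ^ 2) := by
      field_simp
      ring
    rw [← sub_nonneg, key]
    have h6 : 0 ≤ (w u ^ 2 + w' u ^ 2 - e) * u := mul_nonneg (by linarith) hu0.le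
    have h7 : 0 ≤ K + c * w u ^ 2 / u - w u * w' u := by
      rw [hK]; nlinarith
    positivity
  · have hu0 : 0 < u := by linarith
    have h1 := h.energy_le hu
    rw [← hE] at h1
    have h3 := (abs_le.1 (OscSol.cross_le 1 (w u) (w' u)))
    rw [abs_one] at h3
    have h4 : w u * w' u * u⁻¹ ≤ E := by
      rw [← div_eq_mul_inv, div_le_iff₀ hu0]; nlinarith
    have h5 : 0 ≤ K * u⁻¹ := by positivity
    linarith

lemma LogDominant.congr {f g : ℝ → ℝ} (hg : LogDominant g) (hfg : ∀ u, 1 ≤ u → f u = g u) :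
    LogDominant f := by
  obtain ⟨G, κ, C, hκ, hG, hC⟩ := hg
  exact ⟨G, κ, C, hκ, fun u hu => by rw [hfg u hu]; exact hG u hu, hC⟩

/-- `LogDominant` is stable under rescaling and errors `K/u²`, `δ/u` with `δ` small. -/
lemma LogDominant.transfer {g : ℝ → ℝ} (hg : LogDominant g) :
    ∃ κ, 0 < κ ∧ ∀ (a K δ : ℝ) (f : ℝ → ℝ), 0 < a → 0 ≤ K → δ < a * κ →
      (∀ u, 1 ≤ u → a * g u - K / u ^ 2 - δ / u ≤ f u) → LogDominant f := by
  obtain ⟨G, κ, C, hκ, hG, hC⟩ := hg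
  refine ⟨κ, hκ, fun a K δ f ha hK hδ hf => ?_⟩
  refine ⟨fun u => a * G u + K * u⁻¹ - δ * Real.log u, a * κ - δ, a * C, by linarith,
    fun u hu => ?_, fun u hu => ?_⟩
  · have hu0 : 0 < u := by linarith
    obtain ⟨d, hd, hd'⟩ := hG u hu
    refine ⟨_, ?_, ((hd'.const_mul a).fun_add ((hasDerivAt_inv hu0.ne').const_mul K)).fun_sub
      ((Real.hasDerivAt_log hu0.ne').const_mul δ)⟩
    refine le_trans ?_ (hf u hu)
    have := mul_le_mul_of_nonneg_left hd ha.le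
    simp only [div_eq_mul_inv]
    linarith
  · have hu0 : 0 < u := by linarith
    have h1 := mul_le_mul_of_nonneg_left (hC u hu) ha.le
    have h5 : 0 ≤ K * u⁻¹ := by positivity
    simp only
    nlinarith

lemma LogDominant.integral_ge {f : ℝ → ℝ} (hf : LogDominant f)
    (hc : ContinuousOn f (Set.Ioi 0)) :
    ∃ κ C, 0 < κ ∧ ∀ T, 1 ≤ T → κ * Real.log T - C ≤ ∫ u in Set.Ioc 1 T, f u := by
  obtain ⟨G, κ, C, hκ, hG, hC⟩ := hf
  refine ⟨κ, C + G 1, hκ, fun T hT => ?_⟩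
  choose! d hd hd' using hG
  have := intervalIntegral.sub_le_integral_of_hasDeriv_right_of_le (g := G) (g' := d) (φ := f) hT
    (fun u hu => (hd' u hu.1).continuousAt.continuousWithinAt)
    (fun u hu => (hd' u hu.1.le).hasDerivWithinAt)
    ((hc.mono fun u hu => lt_of_lt_of_le one_pos hu.1).integrableOn_Icc)
    (fun u hu => hd u hu.1.le)
  rw [intervalIntegral.integral_of_le hT] at this
  linarith [hC T hT]

/-- If `W = s y + O(1/u)` is bounded with `s ≠ 0`, and `y²/u` is log-dominant, so is `|W|^p/u`.
This uses `|W|^p ≥ δ^(p-1) (|W| - δ)` and `|W| ≥ W²/M`. -/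
lemma logDominant_rpow {y W : ℝ → ℝ} {s K M p : ℝ} (hp : 1 ≤ p) (hs : s ≠ 0) (hM : 0 < M)
    (hK : ∀ u, 1 ≤ u → |W u - s * y u| ≤ K / u) (hW : ∀ u, 1 ≤ u → |W u| ≤ M)
    (hy : LogDominant (fun u => y u ^ 2 / u)) : LogDominant (fun u => |W u| ^ p / u) := by
  obtain ⟨κ, hκ, htr⟩ := hy.transfer
  have hs2 : 0 < s ^ 2 := by positivity
  -- The coefficient of `y²/u` below is `δ^(p-1) s²/(2M)`; this `δ` makes the loss `δ^(p-1) δ/u`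
  -- half of the logarithmic gain.
  set δ := s ^ 2 * κ / (4 * M) with hδ
  have hδ0 : 0 < δ := by positivity
  set A := δ ^ (p - 1) with hA
  have hA0 : 0 < A := Real.rpow_pos_of_pos hδ0 _
  refine htr (A * s ^ 2 / (2 * M)) (A * K ^ 2 / M) (A * δ) _ (by positivity) (by positivity) ?_ ?_
  · rw [hδ]
    have : A * (s ^ 2 * κ / (4 * M)) = (A * s ^ 2 * κ / (2 * M)) / 2 := by field_simp; norm_num
    have h2 : A * s ^ 2 / (2 * M) * κ = A * s ^ 2 * κ / (2 * M) := by ring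
    rw [this, h2]
    have : 0 < A * s ^ 2 * κ / (2 * M) := by positivity
    linarith
  · intro u hu
    have hu0 : 0 < u := by linarith
    have h1 : A * (|W u| - δ) ≤ |W u| ^ p := by
      rcases le_total (|W u|) δ with hle | hle
      · exact (mul_nonpos_of_nonneg_of_nonpos hA0.le (by linarith)).trans (by positivity)
      · have hW0 : 0 < |W u| := hδ0.trans_le hle
        have : |W u| ^ p = |W u| ^ (p - 1) * |W u| := by
          rw [← Real.rpow_add_one hW0.ne']; congr 1; ring
        rw [this]
        have h3 : A ≤ |W u| ^ (p - 1) := Real.rpow_le_rpow hδ0.le hle (by linarith)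
        nlinarith
    have h2 : W u ^ 2 / M ≤ |W u| := by
      rw [div_le_iff₀ hM, ← sq_abs]
      nlinarith [hW u hu, abs_nonneg (W u)]
    have h3 : s ^ 2 * y u ^ 2 / 2 - (K / u) ^ 2 ≤ W u ^ 2 := by
      have : (W u - s * y u) ^ 2 ≤ (K / u) ^ 2 := sq_le_sq.2 ((hK u hu).trans (le_abs_self _))
      nlinarith [sq_nonneg (2 * W u - s * y u)]
    have h4 : (K / u) ^ 2 ≤ K ^ 2 / u := by
      rw [div_pow]
      exact div_le_div_of_nonneg_left (sq_nonneg K) hu0 (by nlinarith)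
    have h5 : A * ((s ^ 2 * y u ^ 2 / 2 - K ^ 2 / u) / M - δ) ≤ |W u| ^ p := by
      refine le_trans (mul_le_mul_of_nonneg_left ?_ hA0.le) h1
      have : (s ^ 2 * y u ^ 2 / 2 - K ^ 2 / u) / M ≤ W u ^ 2 / M :=
        div_le_div_of_nonneg_right (by linarith) hM.le
      linarith
    have h6 := div_le_div_of_nonneg_right h5 hu0.le
    refine le_trans (le_of_eq ?_) h6
    field_simp

/-! ### Asymptotics of the Bessel sum -/

lemma oscSol_besselW {ν : ℝ} (hν : -1 < ν) :
    OscSol (ν ^ 2 - 1 / 4) (besselW ν) (besselW' ν) :=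
  ⟨fun _ hu => hasDerivAt_besselW hν hu, fun _ hu => hasDerivAt_besselW' hν hu⟩

/-- The energy does not vanish, because `g_ν(0) ≠ 0` makes `J_ν` nonzero near `0`. -/
lemma besselW_energy_ne_zero {ν : ℝ} (hν : -1 < ν) :
    besselW ν 1 ^ 2 + besselW' ν 1 ^ 2 ≠ 0 := by
  intro h0
  have hc : ContinuousAt (fun u : ℝ => besselG ν (u ^ 2 / 4)) 0 :=
    ((continuous_besselG hν).comp (by fun_prop)).continuousAt
  have hpos : ∀ᶠ u in 𝓝[>] (0 : ℝ), 0 < besselG ν (u ^ 2 / 4) := by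
    refine (hc.eventually (lt_mem_nhds ?_)).filter_mono nhdsWithin_le_nhds
    simpa using besselG_zero_pos hν
  have hlt : ∀ᶠ u in 𝓝[>] (0 : ℝ), u ∈ Set.Ioc (0 : ℝ) 1 := Ioc_mem_nhdsGT one_pos
  obtain ⟨u, hu, hu1⟩ := (hpos.and hlt).exists
  have hz := (oscSol_besselW hν).eq_zero_of_energy h0 hu1.1 hu1.2
  rw [besselW_eq ν hu1.1] at hz
  have h1 : 0 < u ^ (ν + 1 / 2) := Real.rpow_pos_of_pos hu1.1 _
  have : 0 < (1 / 2 : ℝ) ^ ν * (u ^ (ν + 1 / 2) * besselG ν (u ^ 2 / 4)) := by positivity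
  exact this.ne' hz

/-- `√u J_{α+2j} = (-1)^j √u J_α + O(1/u)`, by the three-term recurrence and the boundedness of
`√u J_ν`. -/
lemma besselW_shift {α : ℝ} (hα : -1 < α) (j : ℕ) :
    ∃ K, ∀ u, 1 ≤ u → |besselW (α + 2 * (j : ℝ)) u - (-1) ^ j * besselW α u| ≤ K / u := by
  induction j with
  | zero => exact ⟨0, fun u _ => by simp⟩
  | succ j ih =>
    obtain ⟨K, hK⟩ := ih
    have hν : -1 < α + 2 * (j : ℝ) := by
      have := (Nat.cast_nonneg j : (0 : ℝ) ≤ j); linarith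
    obtain ⟨M, hM0, hM⟩ := (oscSol_besselW (by linarith : -1 < α + 2 * (j : ℝ) + 1)).bounded
    refine ⟨2 * |α + 2 * (j : ℝ) + 1| * M + K, fun u hu => ?_⟩
    have hu0 : 0 < u := by linarith
    have hrec : besselW (α + 2 * ((j + 1 : ℕ) : ℝ)) u - (-1) ^ (j + 1) * besselW α u
        = 2 * (α + 2 * (j : ℝ) + 1) * besselW (α + 2 * (j : ℝ) + 1) u / u
          - (besselW (α + 2 * (j : ℝ)) u - (-1) ^ j * besselW α u) := by
      have : α + 2 * ((j + 1 : ℕ) : ℝ) = (α + 2 * (j : ℝ)) + 2 := by push_cast; ring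
      rw [this]
      unfold besselW
      rw [besselJ_recurrence hν hu0]
      ring
    rw [hrec, add_div]
    refine (abs_sub _ _).trans (add_le_add ?_ (hK u hu))
    rw [abs_div, abs_mul, abs_mul, abs_of_pos hu0, abs_of_pos (two_pos : (0 : ℝ) < 2)]
    have := hM u hu
    gcongr

lemma besselSum_asymp {α : ℝ} (hα : -1 < α) (b : ℕ → ℝ) (n : ℕ) :
    ∃ K, ∀ u, 1 ≤ u →
      |u ^ (1 / 2 : ℝ) * (∑ j ∈ Finset.range n, b j * besselJ (α + 2 * (j : ℝ)) u)
        - (∑ j ∈ Finset.range n, (-1 : ℝ) ^ j * b j) * besselW α u| ≤ K / u := by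
  choose K hK using besselW_shift hα
  refine ⟨∑ j ∈ Finset.range n, |b j| * K j, fun u hu => ?_⟩
  have : u ^ (1 / 2 : ℝ) * (∑ j ∈ Finset.range n, b j * besselJ (α + 2 * (j : ℝ)) u)
        - (∑ j ∈ Finset.range n, (-1 : ℝ) ^ j * b j) * besselW α u
      = ∑ j ∈ Finset.range n,
          b j * (besselW (α + 2 * (j : ℝ)) u - (-1) ^ j * besselW α u) := by
    rw [Finset.mul_sum, Finset.sum_mul, ← Finset.sum_sub_distrib]
    refine Finset.sum_congr rfl fun j _ => ?_
    unfold besselW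
    ring
  rw [this, Finset.sum_div]
  refine (Finset.abs_sum_le_sum_abs _ _).trans (Finset.sum_le_sum fun j _ => ?_)
  rw [abs_mul, mul_div_assoc]
  exact mul_le_mul_of_nonneg_left (hK j u hu) (abs_nonneg _)

/-- `F(u) = u^α h(u)` with `h` continuous up to `u = 0`. -/
lemma besselSum_factor {α : ℝ} (hα : -1 < α) (b : ℕ → ℝ) (n : ℕ) :
    ∃ h : ℝ → ℝ, Continuous h ∧ ∀ u, 0 < u →
      (∑ j ∈ Finset.range n, b j * besselJ (α + 2 * (j : ℝ)) u) = u ^ α * h u := by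
  refine ⟨fun u => ∑ j ∈ Finset.range n, b j * ((1 / 2) ^ α * (u / 2) ^ (2 * j)
    * besselG (α + 2 * (j : ℝ)) (u ^ 2 / 4)), ?_, fun u hu => ?_⟩
  · refine continuous_finsetSum _ fun j _ => ?_
    have : Continuous (besselG (α + 2 * (j : ℝ))) :=
      continuous_besselG (by have := (Nat.cast_nonneg j : (0 : ℝ) ≤ j); linarith)
    fun_prop
  · rw [Finset.mul_sum]
    refine Finset.sum_congr rfl fun j _ => ?_
    have h2 : 0 < u / 2 := by positivity
    rw [besselJ_eq _ hu, Real.rpow_add h2, show (2 * (j : ℝ)) = ((2 * j : ℕ) : ℝ) by push_cast; rfl,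
      Real.rpow_natCast]
    have : (u / 2) ^ α = u ^ α * (1 / 2) ^ α := by
      rw [← Real.mul_rpow hu.le (by norm_num)]; congr 1; ring
    rw [this]; ring

/-! ### From pointwise bounds to bounds on the integrals -/

lemma tendsto_radius : Tendsto (fun n : ℕ => 2 * (n : ℝ) ^ ((1 : ℝ) / 4)) atTop atTop :=
  Tendsto.const_mul_atTop two_pos
    ((tendsto_rpow_atTop (by norm_num)).comp tendsto_natCast_atTop_atTop)

lemma bounds_of_integrable {f : ℝ → ℝ} (hc : ContinuousOn f (Set.Ioi 0))
    (h0 : ∀ u, 0 < u → 0 ≤ f u) (hint : IntegrableOn f (Set.Ioi 0)) (hne : ∃ u, 0 < u ∧ 0 < f u) :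
    ∃ c₁ c₂ : ℝ, 0 < c₁ ∧ c₁ ≤ c₂ ∧ ∀ᶠ n : ℕ in atTop,
      c₁ ≤ (∫ u in Set.Ioc (0 : ℝ) (2 * (n : ℝ) ^ ((1 : ℝ) / 4)), f u) ∧
      (∫ u in Set.Ioc (0 : ℝ) (2 * (n : ℝ) ^ ((1 : ℝ) / 4)), f u) ≤ c₂ := by
  obtain ⟨v, hv, hfv⟩ := hne
  have hpos : 0 < ∫ u in v..(v + 1), f u :=
    intervalIntegral.integral_pos (by linarith)
      (hc.mono fun u hu => lt_of_lt_of_le hv hu.1)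
      (fun u hu => h0 u (hv.trans hu.1)) ⟨v, by simp, hfv⟩
  rw [intervalIntegral.integral_of_le (by linarith)] at hpos
  have hmono : ∀ s t : Set ℝ, MeasurableSet t → s ⊆ t → t ⊆ Set.Ioi 0 →
      ∫ u in s, f u ≤ ∫ u in t, f u := fun s t ht hst ht0 =>
    setIntegral_mono_set (hint.mono_set ht0)
      ((ae_restrict_iff' ht).2 (Eventually.of_forall fun u hu => h0 u (ht0 hu)))
      (LE.le.eventuallyLE hst)
  refine ⟨_, ∫ u in Set.Ioi 0, f u, hpos,
    hmono _ _ measurableSet_Ioi (fun u hu => hv.trans hu.1) subset_rfl, ?_⟩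
  filter_upwards [tendsto_radius.eventually_ge_atTop (v + 1)] with n hn
  exact ⟨hmono _ _ measurableSet_Ioc (fun u hu => ⟨hv.trans hu.1, hu.2.trans hn⟩)
    (fun u hu => hu.1), hmono _ _ measurableSet_Ioi (fun u hu => hu.1) subset_rfl⟩

/-- If `f ≤ M/u` on `[1, ∞)` and `f` is log-dominant, its integral up to `2 n^(1/4)` is comparable
to `log (n + 1)`. -/
lemma bounds_of_log {f : ℝ → ℝ} {M : ℝ} (hc : ContinuousOn f (Set.Ioi 0))
    (h0 : ∀ u, 0 < u → 0 ≤ f u) (hint : IntegrableOn f (Set.Ioc 0 1)) (hM : 0 ≤ M)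
    (hfM : ∀ u, 1 ≤ u → f u ≤ M / u) (hf : LogDominant f) :
    ∃ c₁ c₂ : ℝ, 0 < c₁ ∧ c₁ ≤ c₂ ∧ ∀ᶠ n : ℕ in atTop,
      c₁ * Real.log ((n : ℝ) + 1) ≤
        (∫ u in Set.Ioc (0 : ℝ) (2 * (n : ℝ) ^ ((1 : ℝ) / 4)), f u) ∧
      (∫ u in Set.Ioc (0 : ℝ) (2 * (n : ℝ) ^ ((1 : ℝ) / 4)), f u) ≤
        c₂ * Real.log ((n : ℝ) + 1) := by
  obtain ⟨κ, C, hκ, hlow⟩ := hf.integral_ge hc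
  set I := ∫ u in Set.Ioc 0 1, f u with hI
  have hI0 : 0 ≤ I := setIntegral_nonneg measurableSet_Ioc fun u hu => h0 u hu.1
  have hsplit : ∀ T, 1 ≤ T → ∫ u in Set.Ioc 0 T, f u = I + ∫ u in Set.Ioc 1 T, f u := by
    intro T hT
    rw [← Set.Ioc_union_Ioc_eq_Ioc zero_le_one hT]
    refine setIntegral_union (Set.Ioc_disjoint_Ioc_of_le le_rfl) measurableSet_Ioc hint ?_
    exact ((hc.mono fun u (hu : u ∈ Set.Icc 1 T) => lt_of_lt_of_le one_pos hu.1).integrableOn_Icc).mono_set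
      Set.Ioc_subset_Icc_self
  have hup : ∀ T, 1 ≤ T → ∫ u in Set.Ioc 1 T, f u ≤ M * Real.log T := by
    intro T hT
    have := intervalIntegral.integral_le_sub_of_hasDeriv_right_of_le
      (g := fun u => M * Real.log u) (g' := fun u => M * u⁻¹) (φ := f) hT
      (fun u hu => ((Real.hasDerivAt_log (by linarith [hu.1])).const_mul
        M).continuousAt.continuousWithinAt)
      (fun u hu => ((Real.hasDerivAt_log (by linarith [hu.1])).const_mul
        M).hasDerivWithinAt)
      ((hc.mono fun u hu => lt_of_lt_of_le one_pos hu.1).integrableOn_Icc)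
      (fun u hu => hfM u hu.1.le)
    rw [intervalIntegral.integral_of_le hT] at this
    simpa using this
  refine ⟨κ / 16, κ / 16 + I + 2 * M, by positivity, by linarith, ?_⟩
  have hlogtop : Tendsto (fun n : ℕ => Real.log (n : ℝ)) atTop atTop :=
    Real.tendsto_log_atTop.comp tendsto_natCast_atTop_atTop
  filter_upwards [tendsto_radius.eventually_ge_atTop 1, eventually_ge_atTop 2,
    hlogtop.eventually_ge_atTop (8 * C / κ)] with n hn hn2 hnC
  have hn2' : (2 : ℝ) ≤ n := by exact_mod_cast hn2
  have hn0 : (0 : ℝ) < n := by linarith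
  have hlogT : Real.log (2 * (n : ℝ) ^ ((1 : ℝ) / 4)) = Real.log 2 + 1 / 4 * Real.log n := by
    rw [Real.log_mul two_ne_zero (Real.rpow_pos_of_pos hn0 _).ne', Real.log_rpow hn0]
  have hl2 : 0 < Real.log 2 := Real.log_pos one_lt_two
  have hl2' : Real.log 2 ≤ 1 := by linarith [Real.log_le_sub_one_of_pos (two_pos : (0 : ℝ) < 2)]
  have hln : Real.log (n + 1) ≤ 2 * Real.log n := by
    have : Real.log ((n : ℝ) ^ 2) = 2 * Real.log n := by rw [Real.log_pow]; norm_num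
    rw [← this]
    exact Real.log_le_log (by linarith) (by nlinarith)
  have hln' : Real.log n ≤ Real.log (n + 1) := Real.log_le_log hn0 (by linarith)
  have hl1 : 1 ≤ Real.log (n + 1) := by
    rw [Real.le_log_iff_exp_le (by linarith)]
    linarith [Real.exp_one_lt_d9]
  have hnC' : 8 * C ≤ Real.log n * κ := (div_le_iff₀ hκ).1 hnC
  have h1 := hlow _ hn
  have h2 := hup _ hn
  rw [hsplit _ hn]
  rw [hlogT] at h1 h2
  constructor
  · have h3 : κ / 16 * Real.log (n + 1) ≤ κ / 16 * (2 * Real.log n) :=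
      mul_le_mul_of_nonneg_left hln (by positivity)
    have h4 : 0 < κ * Real.log 2 := by positivity
    linarith
  · have h3 : M * (Real.log 2 + 1 / 4 * Real.log n) ≤ M * (2 * Real.log (n + 1)) :=
      mul_le_mul_of_nonneg_left (by linarith) hM
    have h4 : I ≤ I * Real.log (n + 1) := le_mul_of_one_le_right hI0 hl1
    have h5 : 0 ≤ κ / 16 * Real.log (n + 1) := by positivity
    linarith

/-- Integrability at `0`: there `u^λ |F|^p = O(u^(λ + α p))` and `λ + α p > -1`. -/
lemma integrableOn_zero_one {F h : ℝ → ℝ} {α lam p : ℝ} (hhc : Continuous h)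
    (hh : ∀ u, 0 < u → F u = u ^ α * h u) (hp0 : 0 ≤ p) (hlam : -1 - α * p < lam)
    (hfc : ContinuousOn (fun u => u ^ lam * |F u| ^ p) (Set.Ioi 0)) :
    IntegrableOn (fun u => u ^ lam * |F u| ^ p) (Set.Ioc 0 1) := by
  obtain ⟨B, hB⟩ := isCompact_Icc.exists_bound_of_continuousOn
    (s := Set.Icc (0 : ℝ) 1) hhc.continuousOn
  have hg : IntegrableOn (fun u : ℝ => B ^ p * u ^ (lam + α * p)) (Set.Ioc 0 1) := by
    have := (intervalIntegral.intervalIntegrable_rpow' (a := 0) (b := 1)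
      (by linarith : -1 < lam + α * p)).const_mul (B ^ p)
    rwa [intervalIntegrable_iff_integrableOn_Ioc_of_le zero_le_one] at this
  refine Integrable.mono' hg
    ((hfc.mono fun u hu => hu.1).aestronglyMeasurable measurableSet_Ioc) ?_
  refine (ae_restrict_iff' measurableSet_Ioc).2 (Eventually.of_forall fun u hu => ?_)
  have hu0 : 0 < u := hu.1
  rw [Real.norm_of_nonneg (by positivity)]
  have h1 : |h u| ≤ B := hB u ⟨hu.1.le, hu.2⟩
  have h2 := Real.rpow_pos_of_pos hu.1 α
  rw [hh u hu.1, abs_mul, abs_of_pos h2, Real.mul_rpow h2.le (abs_nonneg _),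
    ← Real.rpow_mul hu.1.le, Real.rpow_add hu.1]
  have h3 := Real.rpow_le_rpow (abs_nonneg _) h1 hp0
  have h4 := Real.rpow_pos_of_pos hu.1 lam
  have h5 := Real.rpow_pos_of_pos hu.1 (α * p)
  calc u ^ lam * (u ^ (α * p) * |h u| ^ p) = |h u| ^ p * (u ^ lam * u ^ (α * p)) := by ring
    _ ≤ _ := mul_le_mul_of_nonneg_right h3 (by positivity)

/-- The integrand in terms of `√u F(u)`. -/
lemma weight_normal_form (x lam p : ℝ) {u : ℝ} (hu : 0 < u) :
    u ^ lam * |x| ^ p = |u ^ (1 / 2 : ℝ) * x| ^ p * u ^ (lam - p / 2) := by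
  have h2 := Real.rpow_pos_of_pos hu (1 / 2)
  rw [abs_mul, abs_of_pos h2, Real.mul_rpow h2.le (abs_nonneg _), ← Real.rpow_mul hu.le,
    show lam = (1 / 2 * p) + (lam - p / 2) by ring, Real.rpow_add hu,
    show 1 / 2 * p + (lam - p / 2) - p / 2 = lam - p / 2 by ring]
  ring

/-- The dichotomy for any `F` that is `u^α` times a continuous function near `0` and satisfies
`√u F(u) = s y(u) + O(1/u)` with `y` bounded and `y²/u` log-dominant. -/
lemma growth_of_asymptotics {F h y : ℝ → ℝ} {α p lam s K M₀ : ℝ} (hp : 1 ≤ p)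
    (hlam : -1 - α * p < lam) (hhc : Continuous h) (hh : ∀ u, 0 < u → F u = u ^ α * h u)
    (hK : ∀ u, 1 ≤ u → |u ^ (1 / 2 : ℝ) * F u - s * y u| ≤ K / u) (hM₀ : 0 < M₀)
    (hM₀' : ∀ u, 1 ≤ u → |y u| ≤ M₀) (hy : LogDominant fun u => y u ^ 2 / u)
    (hF : ∃ u, 0 < u ∧ F u ≠ 0) :
    (lam < p / 2 - 1 →
      ∃ c₁ c₂ : ℝ, 0 < c₁ ∧ c₁ ≤ c₂ ∧
        ∀ᶠ n : ℕ in atTop,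
          c₁ ≤ (∫ u in Set.Ioc (0 : ℝ) (2 * (n : ℝ) ^ ((1 : ℝ) / 4)),
                  u ^ lam *
                    |F u| ^ p) ∧
          (∫ u in Set.Ioc (0 : ℝ) (2 * (n : ℝ) ^ ((1 : ℝ) / 4)),
              u ^ lam *
                |F u| ^ p) ≤ c₂) ∧
    (lam = p / 2 - 1 →
      s ≠ 0 →
      ∃ c₁ c₂ : ℝ, 0 < c₁ ∧ c₁ ≤ c₂ ∧
        ∀ᶠ n : ℕ in atTop,
          c₁ * Real.log ((n : ℝ) + 1) ≤
            (∫ u in Set.Ioc (0 : ℝ) (2 * (n : ℝ) ^ ((1 : ℝ) / 4)),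
                u ^ lam *
                  |F u| ^ p) ∧
          (∫ u in Set.Ioc (0 : ℝ) (2 * (n : ℝ) ^ ((1 : ℝ) / 4)),
              u ^ lam *
                |F u| ^ p) ≤
            c₂ * Real.log ((n : ℝ) + 1)) := by
  have hp0 : 0 ≤ p := by linarith
  -- `M` bounds `√u |F(u)|` on `[1, ∞)`.
  obtain ⟨M, hM, hWM⟩ : ∃ M, 0 < M ∧ ∀ u, 1 ≤ u → |u ^ (1 / 2 : ℝ) * F u| ≤ M := by
    have hK0 : 0 ≤ K := by
      have := (abs_nonneg _).trans (hK 1 le_rfl)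
      simpa using this
    refine ⟨|s| * M₀ + K + 1, by positivity, fun u hu => ?_⟩
    have h1 : K / u ≤ K := div_le_self hK0 hu
    have h2 : |s * y u| ≤ |s| * M₀ := by
      rw [abs_mul]; exact mul_le_mul_of_nonneg_left (hM₀' u hu) (abs_nonneg s)
    have h3 := abs_add_le (u ^ (1 / 2 : ℝ) * F u - s * y u) (s * y u)
    rw [sub_add_cancel] at h3
    linarith [hK u hu]
  set f : ℝ → ℝ := fun u => u ^ lam * |F u| ^ p with hf
  have hFc : ContinuousOn F (Set.Ioi 0) := by
    refine ContinuousOn.congr (f := fun u => u ^ α * h u) ?_ fun u hu => hh u hu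
    exact (continuousOn_id.rpow_const fun u hu => Or.inl (ne_of_gt hu)).mul hhc.continuousOn
  have hfc : ContinuousOn f (Set.Ioi 0) :=
    (continuousOn_id.rpow_const fun u hu => Or.inl (ne_of_gt hu)).mul
      (hFc.abs.rpow_const fun u _ => Or.inr hp0)
  have hf0 : ∀ u, 0 < u → 0 ≤ f u := fun u hu => by
    have := Real.rpow_pos_of_pos hu lam
    positivity
  have hfint : IntegrableOn f (Set.Ioc 0 1) := integrableOn_zero_one hhc hh hp0 hlam hfc
  have hfW : ∀ u, 0 < u → f u = |u ^ (1 / 2 : ℝ) * F u| ^ p * u ^ (lam - p / 2) := by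
    intro u hu
    exact weight_normal_form (F u) lam p hu
  have hfM : ∀ u, 1 ≤ u → f u ≤ M ^ p * u ^ (lam - p / 2) := by
    intro u hu
    have hu0 : 0 < u := by linarith
    rw [hfW u hu0]
    exact mul_le_mul_of_nonneg_right (Real.rpow_le_rpow (abs_nonneg _) (hWM u hu) hp0)
      (Real.rpow_pos_of_pos hu0 _).le
  refine ⟨fun hlt => ?_, fun heq hsne => ?_⟩
  · refine bounds_of_integrable (f := f) hfc hf0 ?_ ?_
    · rw [← Set.Ioc_union_Ioi_eq_Ioi (zero_le_one' ℝ)]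
      refine hfint.union ?_
      refine Integrable.mono'
        ((integrableOn_Ioi_rpow_of_lt (by linarith : lam - p / 2 < -1) one_pos).const_mul (M ^ p))
        ((hfc.mono (Set.Ioi_subset_Ioi (zero_le_one' ℝ))).aestronglyMeasurable measurableSet_Ioi) ?_
      refine (ae_restrict_iff' measurableSet_Ioi).2 (Eventually.of_forall fun u hu => ?_)
      have hu' : (1 : ℝ) < u := hu
      rw [Real.norm_of_nonneg (hf0 u (by linarith))]
      exact hfM u hu'.le
    · obtain ⟨u, hu, hFu⟩ := hF
      exact ⟨u, hu, mul_pos (Real.rpow_pos_of_pos hu _)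
        (Real.rpow_pos_of_pos (abs_pos.2 hFu) _)⟩
  · have hlam1 : lam - p / 2 = -1 := by linarith
    simp only [hlam1, Real.rpow_neg_one, ← div_eq_mul_inv] at hfW hfM
    refine bounds_of_log (f := f) (M := M ^ p) hfc hf0 hfint (by positivity) hfM ?_
    exact (logDominant_rpow hp hsne hM hK hWM
      hy).congr
        fun u hu => hfW u (by linarith)

/-- growth of the integrals `∫_0^{2n^{1/4}} u^λ |∑_j b_j J_{α+2j}(u)|^p du`. -/
theorem statement15 (α : ℝ) (hα : -1 < α) (N : ℕ) (p : ℝ) (hp : 1 ≤ p)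
    (b : ℕ → ℝ)
    (hF : ∃ u : ℝ, 0 < u ∧
      (∑ j ∈ Finset.range (N + 2), b j * besselJ (α + 2 * (j : ℝ)) u) ≠ 0)
    (lam : ℝ) (hlam : -1 - α * p < lam) :
    (lam < p / 2 - 1 →
      ∃ c₁ c₂ : ℝ, 0 < c₁ ∧ c₁ ≤ c₂ ∧
        ∀ᶠ n : ℕ in atTop,
          c₁ ≤ (∫ u in Set.Ioc (0 : ℝ) (2 * (n : ℝ) ^ ((1 : ℝ) / 4)),
                  u ^ lam *
                    |∑ j ∈ Finset.range (N + 2), b j * besselJ (α + 2 * (j : ℝ)) u| ^ p) ∧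
          (∫ u in Set.Ioc (0 : ℝ) (2 * (n : ℝ) ^ ((1 : ℝ) / 4)),
              u ^ lam *
                |∑ j ∈ Finset.range (N + 2), b j * besselJ (α + 2 * (j : ℝ)) u| ^ p) ≤ c₂) ∧
    (lam = p / 2 - 1 →
      (∑ j ∈ Finset.range (N + 2), (-1 : ℝ) ^ j * b j) ≠ 0 →
      ∃ c₁ c₂ : ℝ, 0 < c₁ ∧ c₁ ≤ c₂ ∧
        ∀ᶠ n : ℕ in atTop,
          c₁ * Real.log ((n : ℝ) + 1) ≤
            (∫ u in Set.Ioc (0 : ℝ) (2 * (n : ℝ) ^ ((1 : ℝ) / 4)),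
                u ^ lam *
                  |∑ j ∈ Finset.range (N + 2), b j * besselJ (α + 2 * (j : ℝ)) u| ^ p) ∧
          (∫ u in Set.Ioc (0 : ℝ) (2 * (n : ℝ) ^ ((1 : ℝ) / 4)),
              u ^ lam *
                |∑ j ∈ Finset.range (N + 2), b j * besselJ (α + 2 * (j : ℝ)) u| ^ p) ≤
            c₂ * Real.log ((n : ℝ) + 1)) := by
  obtain ⟨h, hhc, hh⟩ := besselSum_factor hα b (N + 2)
  obtain ⟨K, hK⟩ := besselSum_asymp hα b (N + 2)
  obtain ⟨M₀, hM₀, hM₀'⟩ := (oscSol_besselW hα).bounded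
  exact growth_of_asymptotics hp hlam hhc hh hK hM₀ hM₀'
    ((oscSol_besselW hα).logDominant (besselW_energy_ne_zero hα)) hF

end
end
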